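/- There exists a map ϱ from the disjoint union of the groups UVB_n (n ≥ 2) to itself (together with the trivial group UVB_1) satisfying: (1) for every braid α, α and ϱ(α) are fused Markov equivalent; (2) if α ∈ UVP_n then ϱ(α) = α; (3) if α ∈ UVB_n \ UVP_n, then ϱ(α) ∈ UVB_{n−1} (interpreting UVB_1 as the trivial group when n = 2). -/

import Mathlib

/-!  Common setup: the unrestricted virtual braid group `UVB n`, its generators
σ_k, ρ_k (1-based indices), the elements λ_{i,j} and B_{i,j}, the permutation
homomorphism ι (characterized by `IsIota`), the section s : S_n → UVB n
(characterized by `IsPermSection`), and fused Markov equivalence. -/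

/-- Generators of the unrestricted virtual braid group `UVB n`:
`Sum.inl i` is the classical generator σ_{i+1} and `Sum.inr i` is the virtual
generator ρ_{i+1}, for `i : Fin (n-1)` (so the 1-based indices are `1, …, n-1`). -/
abbrev UVBGen (n : ℕ) := Sum (Fin (n - 1)) (Fin (n - 1))

namespace UVBGen
def sg {n : ℕ} (i : Fin (n - 1)) : FreeGroup (UVBGen n) := FreeGroup.of (Sum.inl i)
def rg {n : ℕ} (i : Fin (n - 1)) : FreeGroup (UVBGen n) := FreeGroup.of (Sum.inr i)
end UVBGen

open UVBGen in
/-- The defining relations of the unrestricted virtual braid group. -/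
def uvbRels (n : ℕ) : Set (FreeGroup (UVBGen n)) :=
  {r | (∃ i j : Fin (n - 1), (j : ℕ) = (i : ℕ) + 1 ∧
          (r = sg i * sg j * sg i * (sg j * sg i * sg j)⁻¹ ∨
           r = rg i * rg j * rg i * (rg j * rg i * rg j)⁻¹ ∨
           r = rg i * rg j * sg i * (sg j * rg i * rg j)⁻¹ ∨
           r = rg i * sg j * sg i * (sg j * sg i * rg j)⁻¹ ∨
           r = rg j * sg i * sg j * (sg i * sg j * rg i)⁻¹)) ∨
       (∃ i j : Fin (n - 1), ((i : ℕ) + 2 ≤ (j : ℕ) ∨ (j : ℕ) + 2 ≤ (i : ℕ)) ∧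
          (r = sg i * sg j * (sg j * sg i)⁻¹ ∨
           r = rg i * rg j * (rg j * rg i)⁻¹ ∨
           r = sg i * rg j * (rg j * sg i)⁻¹)) ∨
       (∃ i : Fin (n - 1), r = rg i * rg i)}

/-- The unrestricted virtual braid group on `n` strands. -/
abbrev UVB (n : ℕ) := PresentedGroup (uvbRels n)

namespace UVB

/-- The generator σ_k (1-based index; meaningful for `1 ≤ k ≤ n-1`, junk value `1` otherwise). -/
def sigma (n k : ℕ) : UVB n :=
  if h : 1 ≤ k ∧ k ≤ n - 1 then PresentedGroup.of (Sum.inl ⟨k - 1, by omega⟩) else 1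

/-- The generator ρ_k (1-based index; meaningful for `1 ≤ k ≤ n-1`, junk value `1` otherwise). -/
def rho (n k : ℕ) : UVB n :=
  if h : 1 ≤ k ∧ k ≤ n - 1 then PresentedGroup.of (Sum.inr ⟨k - 1, by omega⟩) else 1

/-- The element λ_{i,j} of `UVB n` (1-based indices `1 ≤ i ≠ j ≤ n`; junk value `1` if `i = j`).
For `i < j`:  `λ_{i,j} = ρ_{j-1}⋯ρ_{i+1} · ρ_i σ_i⁻¹ · ρ_{i+1}⋯ρ_{j-1}` and
`λ_{j,i} = ρ_{j-1}⋯ρ_{i+1} · σ_i⁻¹ ρ_i · ρ_{i+1}⋯ρ_{j-1}`. -/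
def lam (n i j : ℕ) : UVB n :=
  if i < j then
    (((List.range' (i + 1) (j - 1 - i)).reverse.map (rho n)).prod) *
      (rho n i * (sigma n i)⁻¹) *
      (((List.range' (i + 1) (j - 1 - i)).map (rho n)).prod)
  else if j < i then
    (((List.range' (j + 1) (i - 1 - j)).reverse.map (rho n)).prod) *
      ((sigma n j)⁻¹ * rho n j) *
      (((List.range' (j + 1) (i - 1 - j)).map (rho n)).prod)
  else 1

/-- The element `B_{i,j} = ρ_{j-1}ρ_{j-2}⋯ρ_{i+1}ρ_i` for `i < j`, and `1` otherwise. -/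
def B (n i j : ℕ) : UVB n :=
  if i < j then ((List.range' i (j - i)).reverse.map (rho n)).prod else 1

/-- The subgroup `U_j` of `UVB n` generated by `{λ_{i,j}, λ_{j,i} : 1 ≤ i < j}`. -/
def U (n j : ℕ) : Subgroup (UVB n) :=
  Subgroup.closure {x | ∃ i, 1 ≤ i ∧ i < j ∧ (x = lam n i j ∨ x = lam n j i)}

end UVB

/-- `ι : UVB n →* S_n` is the homomorphism sending σ_k and ρ_k to the
transposition (k, k+1) (written 0-based on `Fin n`). -/
def IsIota (n : ℕ) (ι : UVB n →* Equiv.Perm (Fin n)) : Prop :=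
  ∀ (k : ℕ) (h1 : 1 ≤ k) (h2 : k ≤ n - 1),
    ι (UVB.sigma n k) = Equiv.swap ⟨k - 1, by omega⟩ ⟨k, by omega⟩ ∧
    ι (UVB.rho n k) = Equiv.swap ⟨k - 1, by omega⟩ ⟨k, by omega⟩

/-- `s : S_n →* UVB n` is the homomorphism sending the transposition (k, k+1) to ρ_k. -/
def IsPermSection (n : ℕ) (s : Equiv.Perm (Fin n) →* UVB n) : Prop :=
  ∀ (k : ℕ) (h1 : 1 ≤ k) (h2 : k ≤ n - 1),
    s (Equiv.swap ⟨k - 1, by omega⟩ ⟨k, by omega⟩) = UVB.rho n k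

/-- The number of orbits of a permutation of `Fin n`
(= number of fixed points + number of nontrivial cycles). -/
def numOrbits {n : ℕ} (π : Equiv.Perm (Fin n)) : ℕ :=
  (Finset.univ.filter fun x => π x = x).card + π.cycleType.card

namespace UVB

private def embedGen (n : ℕ) : UVBGen n → UVBGen (n + 1)
  | Sum.inl i => Sum.inl ⟨i.val, by have := i.isLt; omega⟩
  | Sum.inr i => Sum.inr ⟨i.val, by have := i.isLt; omega⟩

open UVBGen in
/-- The natural inclusion `UVB n →* UVB (n+1)` (σ_k ↦ σ_k, ρ_k ↦ ρ_k). -/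
def incl (n : ℕ) : UVB n →* UVB (n + 1) :=
  PresentedGroup.toGroup (f := fun x => PresentedGroup.of (embedGen n x)) (by
    have key : (FreeGroup.lift fun x => (PresentedGroup.of (embedGen n x) : UVB (n + 1)))
        = (PresentedGroup.mk (uvbRels (n + 1))).comp (FreeGroup.map (embedGen n)) := by
      ext x
      simp [PresentedGroup.of]
    intro r hr
    rw [key]
    simp only [MonoidHom.comp_apply]
    have hmem : FreeGroup.map (embedGen n) r ∈ uvbRels (n + 1) := by
      have hsg : ∀ i : Fin (n - 1), FreeGroup.map (embedGen n) (sg i)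
          = sg (⟨i.val, by have := i.isLt; omega⟩ : Fin (n + 1 - 1)) := by
        intro i; simp [sg, embedGen]
      have hrg : ∀ i : Fin (n - 1), FreeGroup.map (embedGen n) (rg i)
          = rg (⟨i.val, by have := i.isLt; omega⟩ : Fin (n + 1 - 1)) := by
        intro i; simp [rg, embedGen]
      rcases hr with ⟨i, j, hij, hc⟩ | ⟨i, j, hij, hc⟩ | ⟨i, hc⟩
      · refine Or.inl ⟨⟨i.val, by have := i.isLt; omega⟩, ⟨j.val, by have := j.isLt; omega⟩,
          by simpa using hij, ?_⟩
        rcases hc with h | h | h | h | h <;> subst h <;>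
          simp only [map_mul, map_inv, hsg, hrg] <;> tauto
      · refine Or.inr (Or.inl ⟨⟨i.val, by have := i.isLt; omega⟩, ⟨j.val, by have := j.isLt; omega⟩,
          by simpa using hij, ?_⟩)
        rcases hc with h | h | h <;> subst h <;>
          simp only [map_mul, map_inv, hsg, hrg] <;> tauto
      · refine Or.inr (Or.inr ⟨⟨i.val, by have := i.isLt; omega⟩, ?_⟩)
        subst hc
        simp only [map_mul, hsg, hrg]
    exact (QuotientGroup.eq_one_iff _).mpr (Subgroup.subset_normalClosure hmem))

end UVB

/-- The elementary fused Markov moves on the disjoint union of the groups `UVB n`: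
conjugation, and the three right stabilizations (positive, negative, virtual). -/
inductive MarkovBase : (Σ n, UVB n) → (Σ n, UVB n) → Prop
  | conj (n : ℕ) (α γ : UVB n) : MarkovBase ⟨n, α⟩ ⟨n, γ * α * γ⁻¹⟩
  | stabPos (n : ℕ) (α : UVB n) :
      MarkovBase ⟨n, α⟩ ⟨n + 1, UVB.incl n α * UVB.sigma (n + 1) n⟩
  | stabNeg (n : ℕ) (α : UVB n) :
      MarkovBase ⟨n, α⟩ ⟨n + 1, UVB.incl n α * (UVB.sigma (n + 1) n)⁻¹⟩
  | stabVirt (n : ℕ) (α : UVB n) :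
      MarkovBase ⟨n, α⟩ ⟨n + 1, UVB.incl n α * UVB.rho (n + 1) n⟩

/-- Fused Markov equivalence: the smallest equivalence relation generated by the
elementary Markov moves.  By Kamada's theorem, two unrestricted virtual braids are
fused Markov equivalent iff their closures are equivalent fused links. -/
def Markov : (Σ n, UVB n) → (Σ n, UVB n) → Prop := Relation.EqvGen MarkovBase

/-!
A conjugate of a non-pure braid moves the last strand, hence has the form `h ρ_n c` with `h` on the
first `n` strands and `c` a product of such braids and pure braids on the last two strands; up to
conjugation it becomes `β w ρ_n` with `β` on the first `n` strands and `w ∈ ⟨ρ_n σ_n, σ_n ρ_n⟩`.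
Stabilizing by `σ_{n+1}^{±1}`, sliding the new crossing with the mixed relation and the commutation
of pure braids (which the two forbidden relations provide), and destabilizing along `ρ_{n+1}` gives
`β w ρ_n ∼ β (σ_n^{±1} ρ_n) w ρ_n`. So `w` can be removed, and `β ρ_n` is a virtual stabilization
of `β`.
-/

section Involutions

variable {G : Type*} [Group G] {a b x y : G}

theorem mul_self_cancel_left (ha : a * a = 1) (x : G) : a * (a * x) = x := by
  rw [← mul_assoc, ha, one_mul]

theorem conj_conj_of_mul_self (ha : a * a = 1) (x : G) : a * (a * x * a) * a = x := by
  simp only [mul_assoc, ha, mul_self_cancel_left ha, mul_one]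

theorem commute_conj_of_mul_self (ha : a * a = 1) (h : Commute x y) :
    Commute (a * x * a) (a * y * a) := by
  simpa only [inv_eq_of_mul_eq_one_left ha] using (Commute.conj_iff a).2 h

theorem conj_conj_eq_of_semiconjBy (ha : a * a = 1) (hb : b * b = 1)
    (h : SemiconjBy (a * b) x y) : a * (b * x * b) * a = y := by
  calc a * (b * x * b) * a = a * b * x * (b * a) := by simp only [mul_assoc]
    _ = y := by simp only [h.eq, mul_assoc, mul_self_cancel_left hb, ha, mul_one]

end Involutions

/-- The subgroup `⟨a s, s a⟩`. For `a = ρ_k` and `s = σ_k` it is the group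
`⟨λ_{k,k+1}, λ_{k+1,k}⟩` of pure braids on the two strands `k` and `k + 1`. -/
def twistSubgroup {G : Type*} [Group G] (a s : G) : Subgroup G :=
  Subgroup.closure {a * s, s * a}

section Twist

variable {G : Type*} [Group G] {a b s t g x : G}

theorem mul_mem_twistSubgroup : a * s ∈ twistSubgroup a s :=
  Subgroup.subset_closure (Or.inl rfl)

theorem mul_mem_twistSubgroup' : s * a ∈ twistSubgroup a s :=
  Subgroup.subset_closure (Or.inr rfl)

theorem twistSubgroup_le {K : Subgroup G} (ha : a ∈ K) (hs : s ∈ K) : twistSubgroup a s ≤ K := by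
  rw [twistSubgroup, Subgroup.closure_le, Set.pair_subset_iff]
  exact ⟨mul_mem ha hs, mul_mem hs ha⟩

theorem map_twistSubgroup {G' : Type*} [Group G'] (f : G →* G') (a s : G) :
    (twistSubgroup a s).map f = twistSubgroup (f a) (f s) := by
  simp only [twistSubgroup, MonoidHom.map_closure, Set.image_pair, map_mul]

theorem conj_mem_twistSubgroup (ha : SemiconjBy g a b) (hs : SemiconjBy g s t)
    (hx : x ∈ twistSubgroup a s) : g * x * g⁻¹ ∈ twistSubgroup b t := by
  have hmap := map_twistSubgroup (MulAut.conj g).toMonoidHom a s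
  simp only [MulEquiv.coe_toMonoidHom, MulAut.conj_apply, ha.eq, hs.eq, mul_inv_cancel_right]
    at hmap
  exact hmap ▸ Subgroup.mem_map_of_mem _ hx

theorem conj_self_mem_twistSubgroup (ha : a * a = 1) (hx : x ∈ twistSubgroup a s) :
    a * x * a ∈ twistSubgroup a s := by
  have hsemi : SemiconjBy a s (a * s * a) := by simp only [SemiconjBy, mul_assoc, ha, mul_one]
  have hconj := conj_mem_twistSubgroup (SemiconjBy.eq rfl : SemiconjBy a a a) hsemi hx
  rw [inv_eq_of_mul_eq_one_left ha] at hconj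
  refine (show twistSubgroup a (a * s * a) ≤ twistSubgroup a s from ?_) hconj
  rw [twistSubgroup, Subgroup.closure_le, Set.pair_subset_iff]
  simp only [mul_assoc, ha, mul_self_cancel_left ha, mul_one]
  exact ⟨mul_mem_twistSubgroup', mul_mem_twistSubgroup⟩

end Twist

/-- The relations satisfied by `a = ρ_k`, `b = ρ_{k+1}`, `s = σ_k`, `t = σ_{k+1}` in an unrestricted
virtual braid group. -/
structure AdjacentRelations {G : Type*} [Group G] (a b s t : G) : Prop where
  mul_self_left : a * a = 1
  mul_self_right : b * b = 1
  braid_virtual : a * b * a = b * a * b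
  braid_classical : s * t * s = t * s * t
  mixed : SemiconjBy (a * b) s t
  forbidden_left : a * t * s = t * s * b
  forbidden_right : b * s * t = s * t * a

namespace AdjacentRelations

variable {G : Type*} [Group G] {a b s t x y : G}

theorem semiconjBy_virtual (h : AdjacentRelations a b s t) : SemiconjBy (a * b) a b := by
  rw [SemiconjBy, h.braid_virtual, mul_assoc]

theorem symm (h : AdjacentRelations a b s t) : AdjacentRelations b a t s where
  mul_self_left := h.mul_self_right
  mul_self_right := h.mul_self_left
  braid_virtual := h.braid_virtual.symm
  braid_classical := h.braid_classical.symm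
  mixed := by
    have hinv : (a * b)⁻¹ = b * a := by
      rw [mul_inv_rev, inv_eq_of_mul_eq_one_left h.mul_self_left,
        inv_eq_of_mul_eq_one_left h.mul_self_right]
    exact hinv ▸ h.mixed.inv_symm_left
  forbidden_left := h.forbidden_right
  forbidden_right := h.forbidden_left

theorem inv (h : AdjacentRelations a b s t) : AdjacentRelations a b s⁻¹ t⁻¹ where
  mul_self_left := h.mul_self_left
  mul_self_right := h.mul_self_right
  braid_virtual := h.braid_virtual
  braid_classical := by
    simpa only [mul_inv_rev, mul_assoc] using congrArg (·⁻¹) h.braid_classical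
  mixed := h.mixed.inv_right
  forbidden_left := by
    rw [mul_assoc, ← mul_inv_rev, mul_inv_eq_iff_eq_mul, mul_assoc, eq_inv_mul_iff_mul_eq,
      ← mul_assoc, h.forbidden_right, mul_assoc]
  forbidden_right := by
    rw [mul_assoc, ← mul_inv_rev, mul_inv_eq_iff_eq_mul, mul_assoc, eq_inv_mul_iff_mul_eq,
      ← mul_assoc, h.forbidden_left, mul_assoc]

theorem commute_conj (h : AdjacentRelations a b s t) : Commute (s * a) (b * (s * a) * b) := by
  have ha := mul_self_cancel_left h.mul_self_left
  have hb := mul_self_cancel_left h.mul_self_right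
  have ht : t = a * (b * s * b) * a :=
    (conj_conj_eq_of_semiconjBy h.mul_self_left h.mul_self_right h.mixed).symm
  calc s * a * (b * (s * a) * b)
      = s * a * b * s * (a * b * a) * a := by simp only [mul_assoc, h.mul_self_left, mul_one]
    _ = s * t * a * a * b * a := by
        rw [h.braid_virtual, ht]; simp only [mul_assoc, ha]
    _ = b * s * t * a * b * a := by rw [h.forbidden_right]
    _ = b * (s * a) * b * (s * a) := by
        rw [ht]; simp only [mul_assoc, ha, hb]

theorem conj_conj_mul (h : AdjacentRelations a b s t) : a * (b * (s * a) * b) * a = t * b :=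
  conj_conj_eq_of_semiconjBy h.mul_self_left h.mul_self_right
    (h.mixed.mul_right h.semiconjBy_virtual)

theorem commute_mul_mul' (h : AdjacentRelations a b s t) : Commute (a * s) (t * b) := by
  have hconj := commute_conj_of_mul_self h.mul_self_left h.commute_conj
  rwa [h.conj_conj_mul, mul_assoc, mul_assoc, h.mul_self_left, mul_one] at hconj

theorem commute_mul'_mul' (h : AdjacentRelations a b s t) : Commute (s * a) (t * b) := by
  have ha := mul_self_cancel_left h.mul_self_left
  have hb := mul_self_cancel_left h.mul_self_right
  have hconj : b * (s * a) * b = a * (t * b) * a := by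
    rw [← h.conj_conj_mul, conj_conj_of_mul_self h.mul_self_left]
  have hcomm : Commute (b * (s * a) * b) (t * b) := by
    simpa only [mul_assoc, hb] using
      commute_conj_of_mul_self h.mul_self_right h.symm.commute_mul_mul'.symm
  have hswap : s * a * (b * (s * a) * b) * (t * b) = t * b * (b * (s * a) * b) * (s * a) := by
    calc s * a * (b * (s * a) * b) * (t * b)
        = s * a * (a * (t * b) * a) * (a * (b * (s * a) * b) * a) := by
          rw [h.conj_conj_mul, hconj]
      _ = s * t * s * (a * b * a) := by simp only [mul_assoc, ha, hb]
      _ = t * s * t * (b * a * b) := by rw [h.braid_classical, h.braid_virtual]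
      _ = t * b * (b * (s * a) * b) * (b * (a * (t * b) * a) * b) := by
          simp only [mul_assoc, ha, hb]
      _ = t * b * (b * (s * a) * b) * (s * a) := by
          rw [← hconj, conj_conj_of_mul_self h.mul_self_right]
  refine mul_left_cancel (a := b * (s * a) * b) ?_
  rw [← mul_assoc, ← h.commute_conj.eq, hswap, ← hcomm.eq, mul_assoc]

theorem commute_mul_mul (h : AdjacentRelations a b s t) : Commute (a * s) (b * t) := by
  simpa only [mul_inv_rev, inv_inv, inv_eq_of_mul_eq_one_left h.mul_self_left,
    inv_eq_of_mul_eq_one_left h.mul_self_right] using h.inv.commute_mul'_mul'.inv_inv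

theorem commute_of_mem (h : AdjacentRelations a b s t) (hx : x ∈ twistSubgroup a s)
    (hy : y ∈ twistSubgroup b t) : Commute x y := by
  have hle : twistSubgroup a s ≤ Subgroup.centralizer (twistSubgroup b t : Set G) := by
    rw [twistSubgroup, twistSubgroup, Subgroup.centralizer_closure, Subgroup.closure_le,
      Set.pair_subset_iff]
    simp only [SetLike.mem_coe, Subgroup.mem_centralizer_iff, Set.mem_insert_iff,
      Set.mem_singleton_iff, forall_eq_or_imp, forall_eq]
    exact ⟨⟨h.commute_mul_mul.symm, h.commute_mul_mul'.symm⟩,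
      h.symm.commute_mul_mul', h.commute_mul'_mul'.symm⟩
  exact (Subgroup.mem_centralizer_iff.1 (hle hx) y hy).symm

theorem conj_conj_mem (h : AdjacentRelations a b s t) (hx : x ∈ twistSubgroup a s) :
    a * (b * x * b) * a ∈ twistSubgroup b t := by
  have hconj := conj_mem_twistSubgroup h.semiconjBy_virtual h.mixed hx
  simpa only [mul_inv_rev, inv_eq_of_mul_eq_one_left h.mul_self_left,
    inv_eq_of_mul_eq_one_left h.mul_self_right, mul_assoc] using hconj

theorem commute_conj_of_mem (h : AdjacentRelations a b s t) (hx : x ∈ twistSubgroup a s)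
    (hy : y ∈ twistSubgroup a s) : Commute (b * x * b) y := by
  have hcomm := h.commute_of_mem (conj_self_mem_twistSubgroup h.mul_self_left hy)
    (h.conj_conj_mem hx)
  simpa only [conj_conj_of_mul_self h.mul_self_left] using
    (commute_conj_of_mul_self h.mul_self_left hcomm).symm

/-- With `β` a braid on the first `k` strands, `a = ρ_k` and `t = σ_{k+1}`, the left-hand side is
the stabilization of the braid `β w ρ_k`; the right-hand side is conjugate to a virtual
stabilization. -/
theorem stabilization_eq {β w : G} (h : AdjacentRelations a b s t) (hβ : Commute β b)
    (hw : Commute (b * (s * a) * b) w) : β * w * a * t = b * (β * (s * a) * b * (w * a) * b) := by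
  have ha := mul_self_cancel_left h.mul_self_left
  have ht : a * t = b * s * b * a := by
    rw [← conj_conj_eq_of_semiconjBy h.mul_self_left h.mul_self_right h.mixed]
    simp only [mul_assoc, ha]
  calc β * w * a * t
      = β * w * (b * s * a * (a * b * a)) := by rw [mul_assoc, ht]; simp only [mul_assoc, ha]
    _ = β * (w * (b * (s * a) * b)) * a * b := by rw [h.braid_virtual]; simp only [mul_assoc]
    _ = β * b * (s * a * b * (w * a) * b) := by rw [← hw.eq]; simp only [mul_assoc]
    _ = b * (β * (s * a) * b * (w * a) * b) := by rw [hβ.eq]; simp only [mul_assoc]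

end AdjacentRelations

namespace UVB

variable {n : ℕ}

section Generators

variable {i j k : ℕ}

theorem sigma_eq_one (hk : k = 0 ∨ n ≤ k) : sigma n k = 1 :=
  dif_neg (by omega)

theorem rho_eq_one (hk : k = 0 ∨ n ≤ k) : rho n k = 1 :=
  dif_neg (by omega)

theorem sigma_succ (hk : k < n - 1) :
    sigma n (k + 1) = PresentedGroup.mk (uvbRels n) (UVBGen.sg ⟨k, hk⟩) :=
  dif_pos ⟨by omega, hk⟩

theorem rho_succ (hk : k < n - 1) :
    rho n (k + 1) = PresentedGroup.mk (uvbRels n) (UVBGen.rg ⟨k, hk⟩) :=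
  dif_pos ⟨by omega, hk⟩

theorem rho_mul_self (n k : ℕ) : rho n k * rho n k = 1 := by
  by_cases hk : k = 0 ∨ n ≤ k
  · rw [rho_eq_one hk, one_mul]
  · obtain ⟨i, rfl⟩ : ∃ i, k = i + 1 := ⟨k - 1, by omega⟩
    rw [rho_succ (by omega), ← map_mul]
    exact PresentedGroup.one_of_mem (Or.inr (Or.inr ⟨_, rfl⟩))

theorem adjacentRelations (hk : 0 < k) (hkn : k + 1 < n) :
    AdjacentRelations (rho n k) (rho n (k + 1)) (sigma n k) (sigma n (k + 1)) := by
  obtain ⟨i, rfl⟩ : ∃ i, k = i + 1 := ⟨k - 1, by omega⟩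
  have hi : i < n - 1 := by omega
  have hi' : i + 1 < n - 1 := by omega
  constructor
  case mul_self_left => exact rho_mul_self _ _
  case mul_self_right => exact rho_mul_self _ _
  all_goals
    simp only [SemiconjBy, sigma_succ hi, rho_succ hi, sigma_succ hi', rho_succ hi', ← map_mul]
    refine PresentedGroup.mk_eq_mk_of_mul_inv_mem (Or.inl ⟨⟨i, hi⟩, ⟨i + 1, hi'⟩, rfl, ?_⟩)
    simp only [mul_assoc, true_or, or_true]

theorem commute_generators {x y : UVB n} (hij : i + 2 ≤ j) (hx : x = sigma n i ∨ x = rho n i)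
    (hy : y = sigma n j ∨ y = rho n j) : Commute x y := by
  by_cases htrivial : i = 0 ∨ n ≤ j
  · obtain hi | hj := htrivial
    · rw [sigma_eq_one (Or.inl hi), rho_eq_one (Or.inl hi), or_self] at hx
      exact hx ▸ Commute.one_left y
    · rw [sigma_eq_one (Or.inr hj), rho_eq_one (Or.inr hj), or_self] at hy
      exact hy ▸ Commute.one_right x
  obtain ⟨i, rfl⟩ : ∃ i', i = i' + 1 := ⟨i - 1, by omega⟩
  obtain ⟨j, rfl⟩ : ∃ j', j = j' + 1 := ⟨j - 1, by omega⟩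
  have hi : i < n - 1 := by omega
  have hj : j < n - 1 := by omega
  have hrel {v w : FreeGroup (UVBGen n)} (hvw : v * w * (w * v)⁻¹ ∈ uvbRels n) :
      Commute (PresentedGroup.mk (uvbRels n) v) (PresentedGroup.mk (uvbRels n) w) := by
    simpa only [map_mul, ← commute_iff_eq] using PresentedGroup.mk_eq_mk_of_mul_inv_mem hvw
  have hij : i + 2 ≤ j ∨ j + 2 ≤ i := Or.inl (by omega)
  rw [sigma_succ hi, rho_succ hi] at hx
  rw [sigma_succ hj, rho_succ hj] at hy
  obtain rfl | rfl := hx <;> obtain rfl | rfl := hy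
  · exact hrel (Or.inr (Or.inl ⟨⟨i, hi⟩, ⟨j, hj⟩, hij, Or.inl rfl⟩))
  · exact hrel (Or.inr (Or.inl ⟨⟨i, hi⟩, ⟨j, hj⟩, hij, Or.inr (Or.inr rfl)⟩))
  · exact (hrel (Or.inr (Or.inl ⟨⟨j, hj⟩, ⟨i, hi⟩, hij.symm, Or.inr (Or.inr rfl)⟩))).symm
  · exact hrel (Or.inr (Or.inl ⟨⟨i, hi⟩, ⟨j, hj⟩, hij, Or.inr (Or.inl rfl)⟩))

end Generators

/-- The braids that only involve the first `k` strands. The generators with index `0` are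
trivial. -/
def initial (n k : ℕ) : Subgroup (UVB n) :=
  Subgroup.closure {g | ∃ i < k, g = sigma n i ∨ g = rho n i}

/-- The pure braids that only involve the strands `k` and `k + 1`. -/
abbrev twist (n k : ℕ) : Subgroup (UVB n) :=
  twistSubgroup (rho n k) (sigma n k)

/-- The subgroup generated by the braids on the first `k` strands and the pure braids on the strands
`k` and `k + 1`; among the braids on the first `k + 1` strands it plays the role of the stabilizer
of the last one. -/
def fixLast (n k : ℕ) : Subgroup (UVB n) :=
  initial n k ⊔ twist n k

/-- The braids `u` that commute with `twist n k` and that the virtual crossing `ρ_k` carries into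
`initial n k`: they live on the first `k + 1` strands but avoid the strand `k`. -/
def skipStrand (n k : ℕ) : Subgroup (UVB n) :=
  (initial n k).comap (MulAut.conj (rho n k)).toMonoidHom ⊓
    Subgroup.centralizer (twist n k : Set (UVB n))

/-- The union of the two double cosets of `initial n k` and `fixLast n k` represented by `1` and
`ρ_k`. -/
def lastStrandCells (n k : ℕ) : Set (UVB n) :=
  fixLast n k ∪ DoubleCoset.doubleCoset (rho n k) (initial n k) (fixLast n k)

section Subgroups

variable {j k : ℕ} {x y : UVB n}

theorem sigma_mem_initial (hjk : j < k) : sigma n j ∈ initial n k :=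
  Subgroup.subset_closure ⟨j, hjk, Or.inl rfl⟩

theorem rho_mem_initial (hjk : j < k) : rho n j ∈ initial n k :=
  Subgroup.subset_closure ⟨j, hjk, Or.inr rfl⟩

theorem initial_mono (hjk : j ≤ k) : initial n j ≤ initial n k :=
  Subgroup.closure_mono fun _ ⟨i, hi, hg⟩ => ⟨i, hi.trans_le hjk, hg⟩

theorem initial_self (n : ℕ) : initial n n = ⊤ := by
  rw [eq_top_iff, ← PresentedGroup.closure_range_of (uvbRels n), Subgroup.closure_le]
  rintro _ ⟨i | i, rfl⟩
  · have hmem : sigma n (i + 1) ∈ initial n n := sigma_mem_initial (by omega)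
    rwa [sigma_succ i.isLt] at hmem
  · have hmem : rho n (i + 1) ∈ initial n n := rho_mem_initial (by omega)
    rwa [rho_succ i.isLt] at hmem

theorem twist_le_initial (hjk : j < k) : twist n j ≤ initial n k :=
  twistSubgroup_le (rho_mem_initial hjk) (sigma_mem_initial hjk)

theorem initial_one_le (n : ℕ) : initial n 1 ≤ initial n 0 := by
  rw [initial, Subgroup.closure_le]
  rintro g ⟨i, hi, hg⟩
  rw [sigma_eq_one (by omega), rho_eq_one (by omega), or_self] at hg
  exact hg ▸ one_mem _

theorem twist_zero (n : ℕ) : twist n 0 = ⊥ :=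
  eq_bot_iff.2 (twistSubgroup_le (rho_eq_one (Or.inl rfl)) (sigma_eq_one (Or.inl rfl)))

theorem commute_of_mem_initial (hjk : j < k) (hx : x ∈ initial n j)
    (hy : y = sigma n k ∨ y = rho n k) : Commute x y := by
  have hle : initial n j ≤ Subgroup.centralizer {y} := by
    rw [initial, Subgroup.closure_le]
    rintro g ⟨i, hi, hg⟩
    exact Subgroup.mem_centralizer_singleton_iff.2 (commute_generators (by omega) hg hy)
  exact Subgroup.mem_centralizer_singleton_iff.1 (hle hx)

theorem commute_initial_twist (hjk : j < k) (hx : x ∈ initial n j) (hy : y ∈ twist n k) :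
    Commute x y := by
  have hle : twist n k ≤ Subgroup.centralizer {x} :=
    twistSubgroup_le
      (Subgroup.mem_centralizer_singleton_iff.2 (commute_of_mem_initial hjk hx (Or.inr rfl)).symm)
      (Subgroup.mem_centralizer_singleton_iff.2 (commute_of_mem_initial hjk hx (Or.inl rfl)).symm)
  exact (Subgroup.mem_centralizer_singleton_iff.1 (hle hy)).symm

theorem initial_le_fixLast : initial n k ≤ fixLast n k :=
  le_sup_left

theorem twist_le_fixLast : twist n k ≤ fixLast n k :=
  le_sup_right

theorem mem_comap_conj_rho {K : Subgroup (UVB n)} :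
    x ∈ K.comap (MulAut.conj (rho n k)).toMonoidHom ↔ rho n k * x * rho n k ∈ K := by
  rw [Subgroup.mem_comap, MulEquiv.coe_toMonoidHom, MulAut.conj_apply,
    inv_eq_of_mul_eq_one_left (rho_mul_self n k)]

theorem commute_fixLast_twist (hkn : k + 1 < n) (hx : x ∈ fixLast n k)
    (hy : y ∈ twist n (k + 1)) : Commute x y := by
  have hle : fixLast n k ≤ Subgroup.centralizer (twist n (k + 1) : Set (UVB n)) := by
    refine sup_le (fun z hz => ?_) (fun z hz => ?_) <;>
      refine Subgroup.mem_centralizer_iff.2 fun w hw => (Commute.eq ?_).symm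
    · exact commute_initial_twist k.lt_succ_self hz hw
    · obtain rfl | hk := k.eq_zero_or_pos
      · rw [twist_zero, Subgroup.mem_bot] at hz
        exact hz ▸ Commute.one_left w
      · exact (adjacentRelations hk hkn).commute_of_mem hz hw
  exact (Subgroup.mem_centralizer_iff.1 (hle hx) y hy).symm

theorem rho_conj_mem_fixLast (hkn : k + 1 < n) (hx : x ∈ fixLast n k) :
    rho n (k + 1) * x * rho n (k + 1) ∈ fixLast n (k + 1) := by
  have hle : fixLast n k ≤
      (fixLast n (k + 1)).comap (MulAut.conj (rho n (k + 1))).toMonoidHom := by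
    refine sup_le (fun z hz => ?_) (fun z hz => ?_) <;> rw [mem_comap_conj_rho]
    · rw [← (commute_of_mem_initial k.lt_succ_self hz (Or.inr rfl)).eq, mul_assoc, rho_mul_self,
        mul_one]
      exact initial_le_fixLast (initial_mono k.le_succ hz)
    · obtain rfl | hk := k.eq_zero_or_pos
      · rw [twist_zero, Subgroup.mem_bot] at hz
        rw [hz, mul_one, rho_mul_self]
        exact one_mem _
      · have hrho : rho n k ∈ fixLast n (k + 1) :=
          initial_le_fixLast (rho_mem_initial k.lt_succ_self)
        have hconj := (adjacentRelations hk hkn).conj_conj_mem hz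
        rw [← conj_conj_of_mul_self (rho_mul_self n k) (rho n (k + 1) * z * rho n (k + 1))]
        exact mul_mem (mul_mem hrho (twist_le_fixLast hconj)) hrho
  exact mem_comap_conj_rho.1 (hle hx)

end Subgroups

section Cells

variable {k : ℕ} {x g h c : UVB n}

theorem mul_rho_mul_mem_lastStrandCells (hh : h ∈ initial n k) (hc : c ∈ fixLast n k) :
    h * rho n k * c ∈ lastStrandCells n k :=
  Or.inr (DoubleCoset.mem_doubleCoset.2 ⟨h, hh, c, hc, rfl⟩)

theorem mem_fixLast_or_eq_of_mem_lastStrandCells (hg : g ∈ lastStrandCells n k) :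
    g ∈ fixLast n k ∨ 0 < k ∧ ∃ h ∈ initial n k, ∃ c ∈ fixLast n k, g = h * rho n k * c := by
  obtain hg | hg := hg
  · exact Or.inl hg
  obtain ⟨h, hh, c, hc, rfl⟩ := DoubleCoset.mem_doubleCoset.1 hg
  obtain rfl | hk := k.eq_zero_or_pos
  · rw [rho_eq_one (Or.inl rfl), mul_one]
    exact Or.inl (mul_mem (initial_le_fixLast hh) hc)
  · exact Or.inr ⟨hk, h, hh, c, hc, rfl⟩

theorem initial_mul_mem_lastStrandCells (hx : x ∈ initial n k) (hg : g ∈ lastStrandCells n k) :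
    x * g ∈ lastStrandCells n k := by
  obtain hg | hg := hg
  · exact Or.inl (mul_mem (initial_le_fixLast hx) hg)
  obtain ⟨h, hh, c, hc, rfl⟩ := DoubleCoset.mem_doubleCoset.1 hg
  simpa only [mul_assoc] using mul_rho_mul_mem_lastStrandCells (mul_mem hx hh) hc

theorem twist_mul_mem_lastStrandCells (hkn : k + 1 < n)
    (hcells : (initial n (k + 1) : Set (UVB n)) ⊆ lastStrandCells n k)
    (hx : x ∈ twist n (k + 1)) (hg : g ∈ lastStrandCells n (k + 1)) :
    x * g ∈ lastStrandCells n (k + 1) := by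
  obtain hg | hg := hg
  · exact Or.inl (mul_mem (twist_le_fixLast hx) hg)
  obtain ⟨h, hh, c, hc, rfl⟩ := DoubleCoset.mem_doubleCoset.1 hg
  have ha := mul_self_cancel_left (rho_mul_self n k)
  have hb := mul_self_cancel_left (rho_mul_self n (k + 1))
  obtain hfix | ⟨hk, f, hf, c₀, hc₀, rfl⟩ := mem_fixLast_or_eq_of_mem_lastStrandCells (hcells hh)
  · have hslide : x * (h * rho n (k + 1) * c) =
        h * rho n (k + 1) * (rho n (k + 1) * x * rho n (k + 1) * c) := by
      rw [mul_assoc h, ← mul_assoc x, ← (commute_fixLast_twist hkn hfix hx).eq]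
      simp only [mul_assoc, hb]
    rw [hslide]
    exact mul_rho_mul_mem_lastStrandCells hh
      (mul_mem (twist_le_fixLast (conj_self_mem_twistSubgroup (rho_mul_self n _) hx)) hc)
  · have hslide : x * (f * rho n k * c₀ * rho n (k + 1) * c) =
        f * rho n k * rho n (k + 1) * (rho n (k + 1) * (rho n k * x * rho n k) * rho n (k + 1) *
          (rho n (k + 1) * c₀ * rho n (k + 1)) * c) := by
      rw [mul_assoc f, mul_assoc f, mul_assoc f, ← mul_assoc x,
        ← (commute_initial_twist (by omega) hf hx).eq]
      simp only [mul_assoc, ha, hb]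
    have hconj := (adjacentRelations hk hkn).symm.conj_conj_mem hx
    rw [hslide]
    refine mul_rho_mul_mem_lastStrandCells
      (mul_mem (initial_mono k.le_succ hf) (rho_mem_initial k.lt_succ_self)) ?_
    exact mul_mem (mul_mem (initial_le_fixLast (twist_le_initial k.lt_succ_self hconj))
      (rho_conj_mem_fixLast hkn hc₀)) hc

theorem rho_mul_mem_lastStrandCells (hkn : k + 1 < n)
    (hcells : (initial n (k + 1) : Set (UVB n)) ⊆ lastStrandCells n k)
    (hg : g ∈ lastStrandCells n (k + 1)) : rho n (k + 1) * g ∈ lastStrandCells n (k + 1) := by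
  obtain hg | hg := hg
  · simpa only [one_mul] using mul_rho_mul_mem_lastStrandCells (one_mem (initial n (k + 1))) hg
  obtain ⟨h, hh, c, hc, rfl⟩ := DoubleCoset.mem_doubleCoset.1 hg
  have hb := mul_self_cancel_left (rho_mul_self n (k + 1))
  obtain hfix | ⟨hk, f, hf, c₀, hc₀, rfl⟩ := mem_fixLast_or_eq_of_mem_lastStrandCells (hcells hh)
  · refine Or.inl ?_
    simpa only [mul_assoc, SetLike.mem_coe] using mul_mem (rho_conj_mem_fixLast hkn hfix) hc
  · have hslide : rho n (k + 1) * (f * rho n k * c₀ * rho n (k + 1) * c) =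
        f * rho n k * rho n (k + 1) *
          (rho n k * (rho n (k + 1) * c₀ * rho n (k + 1)) * c) := by
      calc rho n (k + 1) * (f * rho n k * c₀ * rho n (k + 1) * c)
          = f * (rho n (k + 1) * rho n k * rho n (k + 1)) *
              (rho n (k + 1) * c₀ * rho n (k + 1) * c) := by
            rw [mul_assoc f, mul_assoc f, mul_assoc f, ← mul_assoc,
              ← (commute_of_mem_initial k.lt_succ_self hf (Or.inr rfl)).eq]
            simp only [mul_assoc, hb]
        _ = _ := by
            rw [← (adjacentRelations hk hkn).braid_virtual]
            simp only [mul_assoc]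
    rw [hslide]
    refine mul_rho_mul_mem_lastStrandCells
      (mul_mem (initial_mono k.le_succ hf) (rho_mem_initial k.lt_succ_self)) ?_
    exact mul_mem (mul_mem (initial_le_fixLast (rho_mem_initial k.lt_succ_self))
      (rho_conj_mem_fixLast hkn hc₀)) hc

theorem initial_succ_le_closure (n k : ℕ) :
    initial n (k + 1) ≤ Subgroup.closure (initial n k ∪ (twist n k ∪ {rho n k})) := by
  rw [initial, Subgroup.closure_le]
  rintro g ⟨i, hi, hg⟩
  have hrho : rho n k ∈ Subgroup.closure (initial n k ∪ (twist n k ∪ {rho n k})) :=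
    Subgroup.subset_closure (Or.inr (Or.inr rfl))
  obtain hik | rfl := Nat.lt_succ_iff_lt_or_eq.1 hi
  · exact Subgroup.subset_closure (Or.inl (Subgroup.subset_closure ⟨i, hik, hg⟩))
  obtain rfl | rfl := hg
  · have htwist : rho n i * sigma n i ∈ Subgroup.closure (initial n i ∪ (twist n i ∪ {rho n i})) :=
      Subgroup.subset_closure (Or.inr (Or.inl mul_mem_twistSubgroup))
    simpa only [mul_self_cancel_left (rho_mul_self n i), SetLike.mem_coe] using
      mul_mem hrho htwist
  · exact hrho

theorem initial_succ_subset_lastStrandCells (hkn : k < n) :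
    (initial n (k + 1) : Set (UVB n)) ⊆ lastStrandCells n k := by
  induction k with
  | zero => exact fun g hg => Or.inl (initial_le_fixLast (initial_one_le n hg))
  | succ k ih =>
    have hcells := ih (by omega)
    have hrho := inv_eq_of_mul_eq_one_left (rho_mul_self n (k + 1))
    intro g hg
    refine Subgroup.closure_induction_left (Or.inl (one_mem _)) ?_ ?_
      (initial_succ_le_closure n (k + 1) hg)
    · rintro x (hx | hx | rfl) g - hg
      · exact initial_mul_mem_lastStrandCells hx hg
      · exact twist_mul_mem_lastStrandCells hkn hcells hx hg
      · exact rho_mul_mem_lastStrandCells hkn hcells hg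
    · rintro x (hx | hx | rfl) g - hg
      · exact initial_mul_mem_lastStrandCells (inv_mem hx) hg
      · exact twist_mul_mem_lastStrandCells hkn hcells (inv_mem hx) hg
      · exact hrho.symm ▸ rho_mul_mem_lastStrandCells hkn hcells hg

theorem conj_mem_twist_or_skipStrand (hkn : k < n) (hh : h ∈ initial n k) (hx : x ∈ twist n k) :
    h * x * h⁻¹ ∈ twist n k ∨ h * x * h⁻¹ ∈ skipStrand n k := by
  obtain _ | k := k
  · rw [twist_zero, Subgroup.mem_bot] at hx
    simp only [hx, mul_one, mul_inv_cancel, one_mem, true_or]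
  obtain hfix | ⟨hk, f, hf, c, hc, rfl⟩ := mem_fixLast_or_eq_of_mem_lastStrandCells
    (initial_succ_subset_lastStrandCells (by omega) hh)
  · rw [(commute_fixLast_twist hkn hfix hx).eq, mul_inv_cancel_right]
    exact Or.inl hx
  have hrel := adjacentRelations hk hkn
  have hconj : f * rho n k * c * x * (f * rho n k * c)⁻¹ = f * (rho n k * x * rho n k) * f⁻¹ := by
    rw [mul_assoc _ c, (commute_fixLast_twist hkn hc hx).eq, mul_inv_rev, mul_inv_rev,
      inv_eq_of_mul_eq_one_left hrel.mul_self_left]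
    simp only [mul_assoc, mul_inv_cancel_left]
  have hf' : f ∈ initial n (k + 1) := initial_mono k.le_succ hf
  rw [hconj]
  refine Or.inr (Subgroup.mem_inf.2 ⟨mem_comap_conj_rho.2 ?_, ?_⟩)
  · have hmem := twist_le_initial k.lt_succ_self (hrel.symm.conj_conj_mem hx)
    have hcomm : Commute f (rho n (k + 1)) :=
      commute_of_mem_initial k.lt_succ_self hf (Or.inr rfl)
    rw [mul_assoc, mul_assoc _ f⁻¹, hcomm.inv_left.eq, ← mul_assoc, ← mul_assoc, ← mul_assoc,
      ← hcomm.eq]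
    simpa only [mul_assoc] using mul_mem (mul_mem hf' hmem) (inv_mem hf')
  · refine Subgroup.mem_centralizer_iff.2 fun y hy => Commute.eq (Commute.symm ?_)
    have hcomm := commute_initial_twist k.lt_succ_self hf hy
    exact (hcomm.mul_left (hrel.symm.commute_conj_of_mem hx hy)).mul_left hcomm.inv_left

theorem exists_eq_mul_mul_of_mem_fixLast (hkn : k < n) (hc : c ∈ fixLast n k) :
    ∃ u ∈ skipStrand n k, ∃ x ∈ twist n k, ∃ h ∈ initial n k, c = u * x * h := by
  rw [fixLast, Subgroup.sup_eq_closure] at hc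
  have hmul {c y : UVB n} (hy : y ∈ initial n k ∨ y ∈ twist n k)
      (hc : ∃ u ∈ skipStrand n k, ∃ x ∈ twist n k, ∃ h ∈ initial n k, c = u * x * h) :
      ∃ u ∈ skipStrand n k, ∃ x ∈ twist n k, ∃ h ∈ initial n k, c * y = u * x * h := by
    obtain ⟨u, hu, x, hx, h, hh, rfl⟩ := hc
    obtain hy | hy := hy
    · exact ⟨u, hu, x, hx, h * y, mul_mem hh hy, mul_assoc _ _ _⟩
    have hslide : u * x * h * y = u * x * (h * y * h⁻¹) * h := by
      simp only [mul_assoc, inv_mul_cancel, mul_one]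
    obtain htwist | hskip := conj_mem_twist_or_skipStrand hkn hh hy
    · exact ⟨u, hu, _, mul_mem hx htwist, h, hh, by rw [hslide, mul_assoc u]⟩
    · have hcomm := Subgroup.mem_centralizer_iff.1 (Subgroup.mem_inf.1 hskip).2 x hx
      exact ⟨_, mul_mem hu hskip, x, hx, h, hh, by rw [hslide, mul_assoc u, hcomm, ← mul_assoc u]⟩
  refine Subgroup.closure_induction_right ?_ (fun c _ y hy ih => hmul hy ih)
    (fun c _ y hy ih => hmul (hy.imp inv_mem inv_mem) ih) hc
  exact ⟨1, one_mem _, 1, one_mem _, 1, one_mem _, by simp only [mul_one]⟩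

end Cells

section Inclusion

variable {k : ℕ}

theorem incl_sigma (hk : k < n) : incl n (sigma n k) = sigma (n + 1) k := by
  obtain _ | k := k
  · rw [sigma_eq_one (Or.inl rfl), sigma_eq_one (Or.inl rfl), map_one]
  · rw [sigma_succ (by omega), sigma_succ (by omega)]
    exact PresentedGroup.toGroup.of _

theorem incl_rho (hk : k < n) : incl n (rho n k) = rho (n + 1) k := by
  obtain _ | k := k
  · rw [rho_eq_one (Or.inl rfl), rho_eq_one (Or.inl rfl), map_one]
  · rw [rho_succ (by omega), rho_succ (by omega)]
    exact PresentedGroup.toGroup.of _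

theorem map_incl_initial (hk : k ≤ n) : (initial n k).map (incl n) = initial (n + 1) k := by
  rw [initial, initial, MonoidHom.map_closure]
  congr 1
  ext g
  constructor
  · rintro ⟨_, ⟨i, hi, rfl | rfl⟩, rfl⟩
    · exact ⟨i, hi, Or.inl (incl_sigma (by omega))⟩
    · exact ⟨i, hi, Or.inr (incl_rho (by omega))⟩
  · rintro ⟨i, hi, rfl | rfl⟩
    · exact ⟨_, ⟨i, hi, Or.inl rfl⟩, incl_sigma (by omega)⟩
    · exact ⟨_, ⟨i, hi, Or.inr rfl⟩, incl_rho (by omega)⟩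

theorem map_incl_twist (hk : k < n) : (twist n k).map (incl n) = twist (n + 1) k := by
  rw [map_twistSubgroup, incl_rho hk, incl_sigma hk]

theorem incl_mem_initial (hk : k ≤ n) {g : UVB n} (hg : g ∈ initial n k) :
    incl n g ∈ initial (n + 1) k :=
  map_incl_initial hk ▸ Subgroup.mem_map_of_mem _ hg

theorem incl_mem_twist (hk : k < n) {g : UVB n} (hg : g ∈ twist n k) :
    incl n g ∈ twist (n + 1) k :=
  map_incl_twist hk ▸ Subgroup.mem_map_of_mem _ hg

end Inclusion

end UVB

namespace IsIota

open UVB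

variable {n k : ℕ} {ι : UVB n →* Equiv.Perm (Fin n)} {g : UVB n}

theorem map_sigma_eq_map_rho (hι : IsIota n ι) (k : ℕ) : ι (sigma n k) = ι (rho n k) := by
  by_cases hk : 1 ≤ k ∧ k ≤ n - 1
  · rw [(hι k hk.1 hk.2).1, (hι k hk.1 hk.2).2]
  · rw [sigma_eq_one (by omega), rho_eq_one (by omega)]

theorem twist_le_ker (hι : IsIota n ι) (k : ℕ) : twist n k ≤ ι.ker := by
  refine (Subgroup.map_eq_bot_iff _).1 ?_
  rw [map_twistSubgroup, hι.map_sigma_eq_map_rho, ← Subgroup.closure_singleton_one]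
  simp only [twistSubgroup, ← map_mul, rho_mul_self, map_one, Set.pair_eq_singleton]

theorem map_rho_apply (hι : IsIota n ι) {j : Fin n} (hkj : k < j) : ι (rho n k) j = j := by
  obtain rfl | hk := k.eq_zero_or_pos
  · rw [rho_eq_one (Or.inl rfl), map_one, Equiv.Perm.one_apply]
  · rw [(hι k hk (by omega)).2]
    refine Equiv.swap_apply_of_ne_of_ne ?_ ?_ <;> rw [Ne, Fin.ext_iff] <;> simp only <;> omega

theorem map_apply_of_mem_fixLast (hι : IsIota n ι) {j : Fin n} (hkj : k ≤ j)
    (hg : g ∈ fixLast n k) : ι g j = j := by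
  have hle : fixLast n k ≤ (MulAction.stabilizer (Equiv.Perm (Fin n)) j).comap ι := by
    refine sup_le ?_ fun x hx => ?_
    · rw [initial, Subgroup.closure_le]
      rintro x ⟨i, hi, hx⟩
      have hxi : ι x = ι (rho n i) := by
        obtain rfl | rfl := hx
        exacts [hι.map_sigma_eq_map_rho i, rfl]
      rw [SetLike.mem_coe, Subgroup.mem_comap, MulAction.mem_stabilizer_iff, hxi]
      exact hι.map_rho_apply (by omega)
    · rw [Subgroup.mem_comap, MonoidHom.mem_ker.1 (hι.twist_le_ker k hx)]
      exact one_mem _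
  exact hle hg

theorem surjective (hι : IsIota n ι) : Function.Surjective ι := by
  obtain _ | m := n
  · exact Function.surjective_to_subsingleton ι
  rw [← MonoidHom.mrange_eq_top, eq_top_iff, ← Equiv.Perm.mclosure_swap_castSucc_succ m,
    Submonoid.closure_le]
  rintro _ ⟨i, rfl⟩
  exact ⟨rho (m + 1) (i + 1), (hι (i + 1) (by omega) (by omega)).2⟩

theorem exists_conj_map_last_ne {n : ℕ} {ι : UVB (n + 1) →* Equiv.Perm (Fin (n + 1))}
    (hι : IsIota (n + 1) ι) {α : UVB (n + 1)} (hα : α ∉ ι.ker) :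
    ∃ g, ι (g * α * g⁻¹) (Fin.last n) ≠ Fin.last n := by
  obtain ⟨j, hj⟩ := not_forall.1 (mt Equiv.Perm.ext hα)
  obtain ⟨g, hg⟩ := hι.surjective (Equiv.swap j (Fin.last n))
  refine ⟨g, fun hlast => hj ?_⟩
  have hinv : (ι g)⁻¹ (Fin.last n) = j := by rw [hg, Equiv.swap_inv, Equiv.swap_apply_right]
  rw [map_mul, map_mul, map_inv, Equiv.Perm.mul_apply, Equiv.Perm.mul_apply, hinv,
    ← Equiv.Perm.eq_inv_iff_eq, hinv] at hlast
  exact hlast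

end IsIota

namespace Markov

open UVB

variable {n : ℕ}

protected theorem symm {a b : Σ n, UVB n} (h : Markov a b) : Markov b a :=
  Relation.EqvGen.symm _ _ h

protected theorem trans {a b c : Σ n, UVB n} (hab : Markov a b) (hbc : Markov b c) : Markov a c :=
  Relation.EqvGen.trans _ _ _ hab hbc

instance : Trans Markov Markov Markov :=
  ⟨Markov.trans⟩

theorem conj (α γ : UVB n) : Markov ⟨n, α⟩ ⟨n, γ * α * γ⁻¹⟩ :=
  Relation.EqvGen.rel _ _ (MarkovBase.conj n α γ)

protected theorem mul_comm (α γ : UVB n) : Markov ⟨n, α * γ⟩ ⟨n, γ * α⟩ := by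
  simpa only [mul_assoc, mul_inv_cancel, mul_one] using conj (α * γ) γ

theorem mul_rho (α : UVB n) : Markov ⟨n, α⟩ ⟨n + 1, incl n α * rho (n + 1) n⟩ :=
  Relation.EqvGen.rel _ _ (MarkovBase.stabVirt n α)

/-- Stabilizing by `t`, sliding and destabilizing virtually inserts the pure braid `s ρ_n`. -/
theorem insert_of_stabilization {s β w : UVB (n + 1)} {t : UVB (n + 2)} (hn : 0 < n)
    (hstab : ∀ α : UVB (n + 1), Markov ⟨n + 1, α⟩ ⟨n + 2, incl (n + 1) α * t⟩)
    (hrel : AdjacentRelations (rho (n + 2) n) (rho (n + 2) (n + 1)) (incl (n + 1) s) t)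
    (hs : s * rho (n + 1) n ∈ twist (n + 1) n) (hβ : β ∈ initial (n + 1) n)
    (hw : w ∈ twist (n + 1) n) :
    Markov ⟨n + 1, β * w * rho (n + 1) n⟩
      ⟨n + 1, β * (s * rho (n + 1) n * w) * rho (n + 1) n⟩ := by
  have hrho : incl (n + 1) (rho (n + 1) n) = rho (n + 2) n := incl_rho n.lt_succ_self
  set a := rho (n + 1) n
  set b := rho (n + 2) (n + 1)
  have hβb : Commute (incl (n + 1) β) b :=
    commute_of_mem_initial n.lt_succ_self (incl_mem_initial n.le_succ hβ) (Or.inr rfl)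
  have hwb : Commute (b * incl (n + 1) (s * a) * b) (incl (n + 1) w) :=
    (adjacentRelations hn (by omega)).commute_conj_of_mem (incl_mem_twist n.lt_succ_self hs)
      (incl_mem_twist n.lt_succ_self hw)
  have hslide : incl (n + 1) (β * w * a) * t =
      b * (incl (n + 1) (β * (s * a)) * b * incl (n + 1) (w * a) * b) := by
    rw [map_mul, hrho] at hwb
    simp only [map_mul, hrho, hrel.stabilization_eq hβb hwb]
  calc
    Markov ⟨n + 1, β * w * a⟩ ⟨n + 2, incl (n + 1) (β * w * a) * t⟩ := hstab _
    Markov _ ⟨n + 2, incl (n + 1) (β * (s * a)) * b * incl (n + 1) (w * a)⟩ := by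
      rw [hslide]
      simpa only [mul_assoc, hrel.mul_self_right, mul_one] using
        Markov.mul_comm b (incl (n + 1) (β * (s * a)) * b * incl (n + 1) (w * a) * b)
    Markov _ ⟨n + 2, incl (n + 1) (w * a * (β * (s * a))) * b⟩ := by
      simpa only [map_mul, mul_assoc] using
        Markov.mul_comm (incl (n + 1) (β * (s * a)) * b) (incl (n + 1) (w * a))
    Markov _ ⟨n + 1, w * a * (β * (s * a))⟩ := (mul_rho _).symm
    Markov _ ⟨n + 1, β * (s * a * w) * a⟩ := by
      simpa only [mul_assoc] using Markov.mul_comm (w * a) (β * (s * a))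

section VirtualInsertion

variable {β w : UVB (n + 1)} (hn : 0 < n) (hβ : β ∈ initial (n + 1) n)
include hn hβ

theorem insert_sigma_mul_rho (hw : w ∈ twist (n + 1) n) :
    Markov ⟨n + 1, β * w * rho (n + 1) n⟩
      ⟨n + 1, β * (sigma (n + 1) n * rho (n + 1) n * w) * rho (n + 1) n⟩ := by
  refine insert_of_stabilization hn
    (fun α => Relation.EqvGen.rel _ _ (MarkovBase.stabPos _ α)) ?_ mul_mem_twistSubgroup' hβ hw
  rw [incl_sigma n.lt_succ_self]
  exact adjacentRelations hn (by omega)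

theorem insert_sigma_inv_mul_rho (hw : w ∈ twist (n + 1) n) :
    Markov ⟨n + 1, β * w * rho (n + 1) n⟩
      ⟨n + 1, β * ((sigma (n + 1) n)⁻¹ * rho (n + 1) n * w) * rho (n + 1) n⟩ := by
  have hinv : (sigma (n + 1) n)⁻¹ * rho (n + 1) n = (rho (n + 1) n * sigma (n + 1) n)⁻¹ := by
    rw [mul_inv_rev, inv_eq_of_mul_eq_one_left (rho_mul_self _ _)]
  refine insert_of_stabilization hn
    (fun α => Relation.EqvGen.rel _ _ (MarkovBase.stabNeg _ α)) ?_
    (hinv ▸ inv_mem mul_mem_twistSubgroup) hβ hw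
  rw [map_inv, incl_sigma n.lt_succ_self]
  exact (adjacentRelations hn (by omega)).inv

theorem mul_twist_mul_rho (hw : w ∈ twist (n + 1) n) :
    Markov ⟨n + 1, β * rho (n + 1) n⟩ ⟨n + 1, β * w * rho (n + 1) n⟩ := by
  have ha := mul_self_cancel_left (rho_mul_self (n + 1) n)
  have hinv := inv_eq_of_mul_eq_one_left (rho_mul_self (n + 1) n)
  induction hw using Subgroup.closure_induction_left with
  | one => rw [mul_one]; exact Relation.EqvGen.refl _
  | mul_left x hx w hw ih =>
    refine ih.trans ?_
    obtain rfl | rfl := hx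
    · simpa only [mul_assoc, ha, inv_mul_cancel_left] using
        (insert_sigma_inv_mul_rho hn hβ (mul_mem mul_mem_twistSubgroup hw)).symm
    · exact insert_sigma_mul_rho hn hβ hw
  | inv_mul_cancel x hx w hw ih =>
    refine ih.trans ?_
    obtain rfl | rfl := hx
    · simpa only [mul_inv_rev, hinv] using insert_sigma_inv_mul_rho hn hβ hw
    · simpa only [mul_assoc, mul_inv_cancel_left, mul_inv_rev, hinv, ha] using
        (insert_sigma_mul_rho hn hβ (mul_mem (inv_mem mul_mem_twistSubgroup') hw)).symm

end VirtualInsertion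

theorem exists_drop_strand_of_mem_initial {β : UVB (n + 1)} (hβ : β ∈ initial (n + 1) n) :
    ∃ γ : UVB n, Markov ⟨n + 1, β * rho (n + 1) n⟩ ⟨n, γ⟩ := by
  rw [← map_incl_initial le_rfl] at hβ
  obtain ⟨γ, -, rfl⟩ := hβ
  exact ⟨γ, (mul_rho γ).symm⟩

theorem exists_drop_strand_of_mem_doubleCoset {h c : UVB (n + 1)} (hn : 0 < n)
    (hh : h ∈ initial (n + 1) n) (hc : c ∈ fixLast (n + 1) n) :
    ∃ γ : UVB n, Markov ⟨n + 1, h * rho (n + 1) n * c⟩ ⟨n, γ⟩ := by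
  obtain ⟨u, hu, x, hx, h', hh', rfl⟩ := exists_eq_mul_mul_of_mem_fixLast n.lt_succ_self hc
  set a := rho (n + 1) n
  have haa : a * a = 1 := rho_mul_self (n + 1) n
  have hβ : h' * h * (a * u * a) ∈ initial (n + 1) n :=
    mul_mem (mul_mem hh' hh) (mem_comap_conj_rho.1 (Subgroup.mem_inf.1 hu).1)
  have hw : a * x * a ∈ twist (n + 1) n := conj_self_mem_twistSubgroup haa hx
  obtain ⟨γ, hγ⟩ := exists_drop_strand_of_mem_initial hβ
  refine ⟨γ, ?_⟩
  calc
    Markov ⟨n + 1, h * a * (u * x * h')⟩ ⟨n + 1, h' * h * (a * u * a) * (a * x * a) * a⟩ := by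
      simpa only [mul_assoc, haa, mul_self_cancel_left haa, mul_one] using
        Markov.mul_comm (h * a * (u * x)) h'
    Markov _ ⟨n + 1, h' * h * (a * u * a) * a⟩ := (mul_twist_mul_rho hn hβ hw).symm
    Markov _ ⟨n, γ⟩ := hγ

theorem exists_drop_strand_of_map_last_ne {ι : UVB (n + 1) →* Equiv.Perm (Fin (n + 1))}
    (hι : IsIota (n + 1) ι) {α : UVB (n + 1)} (hα : ι α (Fin.last n) ≠ Fin.last n) :
    ∃ γ : UVB n, Markov ⟨n + 1, α⟩ ⟨n, γ⟩ := by
  have hcells : α ∈ lastStrandCells (n + 1) n :=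
    initial_succ_subset_lastStrandCells n.lt_succ_self (initial_self (n + 1) ▸ Subgroup.mem_top α)
  obtain hfix | ⟨hn, h, hh, c, hc, rfl⟩ := mem_fixLast_or_eq_of_mem_lastStrandCells hcells
  · exact absurd (hι.map_apply_of_mem_fixLast (Fin.val_last n).ge hfix) hα
  · exact exists_drop_strand_of_mem_doubleCoset hn hh hc

theorem exists_drop_strand_of_notMem_ker {ι : UVB n →* Equiv.Perm (Fin n)} (hι : IsIota n ι)
    {α : UVB n} (hα : α ∉ ι.ker) : ∃ γ : UVB (n - 1), Markov ⟨n, α⟩ ⟨n - 1, γ⟩ := by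
  obtain _ | n := n
  · exact absurd (Subsingleton.elim _ _) hα
  obtain ⟨g, hg⟩ := hι.exists_conj_map_last_ne hα
  obtain ⟨γ, hγ⟩ := exists_drop_strand_of_map_last_ne hι hg
  exact ⟨γ, (conj α g).trans hγ⟩

end Markov

/-! ## Statement 6 -/

/-- Lemma 3 of the paper.  There is a map ϱ on the disjoint union of
the groups `UVB n` such that: (1) every braid α is fused Markov equivalent to ϱ(α);
(2) ϱ(α) = α for pure α; (3) if α ∈ UVB n \ UVP n then ϱ(α) ∈ UVB (n−1). -/
theorem statement6 (ι : ∀ n, UVB n →* Equiv.Perm (Fin n)) (hι : ∀ n, IsIota n (ι n)) :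
    ∃ f : (Σ n, UVB n) → (Σ n, UVB n),
      (∀ a : Σ n, UVB n, 2 ≤ a.1 → Markov a (f a)) ∧
      (∀ n, 2 ≤ n → ∀ α : UVB n, α ∈ (ι n).ker → f ⟨n, α⟩ = ⟨n, α⟩) ∧
      (∀ n, 2 ≤ n → ∀ α : UVB n, α ∉ (ι n).ker → (f ⟨n, α⟩).1 = n - 1) := by
  have hreduce (a : Σ n, UVB n) : ∃ b, Markov a b ∧ (a.2 ∈ (ι a.1).ker → b = a) ∧
      (a.2 ∉ (ι a.1).ker → b.1 = a.1 - 1) := by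
    by_cases ha : a.2 ∈ (ι a.1).ker
    · exact ⟨a, Relation.EqvGen.refl a, fun _ => rfl, absurd ha⟩
    · obtain ⟨γ, hγ⟩ := Markov.exists_drop_strand_of_notMem_ker (hι a.1) ha
      exact ⟨⟨a.1 - 1, γ⟩, hγ, fun hpure => absurd hpure ha, fun _ => rfl⟩
  choose f hMarkov hpure hnonpure using hreduce
  exact ⟨f, fun a _ => hMarkov a, fun n _ α => hpure ⟨n, α⟩, fun n _ α => hnonpure ⟨n, α⟩⟩
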